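/- Let K be an infinite field, n ≥ 2, and let f(x_1,…,x_m) be a multilinear polynomial over K which is neither a central polynomial nor a polynomial identity for M_n(K) (i.e., Im(f) is not contained in the set of scalar matrices). Then Im(f) on M_n(K) contains a matrix of the form Σ_{i=1}^{n} c_i E_{i,i+1} (indices taken modulo n, so the last summand is c_n E_{n,1}) with c_1 c_2 ⋯ c_n ≠ 0. -/

import Mathlib

/-- Evaluation of the multilinear polynomial `f(x₁,…,x_m) = ∑_{σ ∈ S_m} α_σ x_{σ(1)}⋯x_{σ(m)}`
given by coefficients `α` at the tuple `a`. -/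
def mlEval {K A : Type} [Field K] [Ring A] [Algebra K A] {m : ℕ}
    (α : Equiv.Perm (Fin m) → K) (a : Fin m → A) : A :=
  ∑ σ : Equiv.Perm (Fin m), α σ • (List.ofFn fun i => a (σ i)).prod

/-- The image of the multilinear polynomial with coefficients `α` on the algebra `A`. -/
def mlImage {K A : Type} [Field K] [Ring A] [Algebra K A] {m : ℕ}
    (α : Equiv.Perm (Fin m) → K) : Set A :=
  Set.range (mlEval α)

/-- `a` is homogeneous of degree `g` in the Vasilovsky `ZMod n`-grading of `Mₙ(K)`:
`a` lies in the span of the matrix units `E i j` with `j - i ≡ g (mod n)`. -/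
def VasHomog {K : Type} [Field K] {n : ℕ} (g : ZMod n)
    (a : Matrix (Fin n) (Fin n) K) : Prop :=
  ∀ i j : Fin n, ((j.val : ZMod n) - (i.val : ZMod n)) ≠ g → a i j = 0

/-- Statement (S0): `f` vanishes on homogeneous tuples whose degrees sum to `0`. -/
def StmtS0 {K : Type} [Field K] (n : ℕ) {m : ℕ} (α : Equiv.Perm (Fin m) → K) : Prop :=
  ∀ (g : Fin m → ZMod n) (a : Fin m → Matrix (Fin n) (Fin n) K),
    (∀ i, VasHomog (g i) (a i)) → (∑ i, g i) = 0 → mlEval α a = 0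

/-- Statement (S1): `f` vanishes on homogeneous tuples whose degrees sum to a nonzero element. -/
def StmtS1 {K : Type} [Field K] (n : ℕ) {m : ℕ} (α : Equiv.Perm (Fin m) → K) : Prop :=
  ∀ (g : Fin m → ZMod n) (a : Fin m → Matrix (Fin n) (Fin n) K),
    (∀ i, VasHomog (g i) (a i)) → (∑ i, g i) ≠ 0 → mlEval α a = 0

/-- Statement (S2): `f` has trace-zero values on homogeneous tuples whose degrees sum to `0`. -/
def StmtS2 {K : Type} [Field K] (n : ℕ) {m : ℕ} (α : Equiv.Perm (Fin m) → K) : Prop :=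
  ∀ (g : Fin m → ZMod n) (a : Fin m → Matrix (Fin n) (Fin n) K),
    (∀ i, VasHomog (g i) (a i)) → (∑ i, g i) = 0 → Matrix.trace (mlEval α a) = 0

/-- The set of scalar matrices in `Mₙ(K)`. -/
def scalarSet (K : Type) [Field K] (n : ℕ) : Set (Matrix (Fin n) (Fin n) K) :=
  {b | ∃ c : K, b = c • (1 : Matrix (Fin n) (Fin n) K)}

/-- The set `slₙ(K)` of trace-zero matrices in `Mₙ(K)`. -/
def slSet (K : Type) [Field K] (n : ℕ) : Set (Matrix (Fin n) (Fin n) K) :=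
  {b | Matrix.trace b = 0}

theorem ml_map {K A B : Type} [Field K] [Ring A] [Algebra K A] [Ring B] [Algebra K B] {m : ℕ}
    (α : Equiv.Perm (Fin m) → K) (φ : A →ₐ[K] B) (a : Fin m → A) :
    φ (mlEval α a) = mlEval α (fun k => φ (a k)) := by
  unfold mlEval
  rw [map_sum]
  refine Finset.sum_congr rfl fun σ _ => ?_
  rw [map_smul, map_list_prod, List.map_ofFn]
  rfl

noncomputable def mlMul {K A : Type} [Field K] [Ring A] [Algebra K A] {m : ℕ}
    (α : Equiv.Perm (Fin m) → K) : MultilinearMap K (fun _ : Fin m => A) A :=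
  ∑ σ : Equiv.Perm (Fin m), α σ • (MultilinearMap.mkPiAlgebraFin K m A).domDomCongr σ

theorem mlMul_apply {K A : Type} [Field K] [Ring A] [Algebra K A] {m : ℕ}
    (α : Equiv.Perm (Fin m) → K) (a : Fin m → A) : mlMul α a = mlEval α a := by
  simp [mlMul, mlEval]

theorem vas_mul {K : Type} [Field K] {n : ℕ} {g h : ZMod n} {a b : Matrix (Fin n) (Fin n) K}
    (ha : VasHomog g a) (hb : VasHomog h b) : VasHomog (g + h) (a * b) := by
  intro i j hij
  rw [Matrix.mul_apply]
  refine Finset.sum_eq_zero fun k _ => ?_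
  by_cases h1 : ((k.val : ZMod n) - (i.val : ZMod n)) = g
  · rw [hb k j, mul_zero]
    intro h2
    apply hij
    rw [← h1, ← h2]; ring
  · rw [ha i k h1, zero_mul]

theorem vas_prod {K : Type} [Field K] {n : ℕ} : ∀ {m : ℕ} (g : Fin m → ZMod n)
    (a : Fin m → Matrix (Fin n) (Fin n) K), (∀ i, VasHomog (g i) (a i)) →
    VasHomog (∑ i, g i) (List.ofFn a).prod
  | 0, g, a, _ => by
    intro i j hij
    have : i ≠ j := by
      rintro rfl
      simp at hij
    simp [Matrix.one_apply_ne this]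
  | m + 1, g, a, h => by
    rw [List.ofFn_succ, List.prod_cons, Fin.sum_univ_succ]
    exact vas_mul (h 0) (vas_prod _ _ fun i => h i.succ)

theorem vas_ml {K : Type} [Field K] {n m : ℕ} (α : Equiv.Perm (Fin m) → K) (g : Fin m → ZMod n)
    (a : Fin m → Matrix (Fin n) (Fin n) K) (h : ∀ i, VasHomog (g i) (a i)) :
    VasHomog (∑ i, g i) (mlEval α a) := by
  intro i j hij
  unfold mlEval
  rw [Matrix.sum_apply]
  refine Finset.sum_eq_zero fun σ _ => ?_
  rw [Matrix.smul_apply, vas_prod (fun k => g (σ k)) _ (fun k => h (σ k)), smul_zero]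
  rwa [Equiv.sum_comp σ g]

theorem exists_unit_tuple {K : Type} [Field K] {n m : ℕ} (hn : 2 ≤ n)
    (α : Equiv.Perm (Fin m) → K)
    (hf : ¬ (mlImage α : Set (Matrix (Fin n) (Fin n) K)) ⊆ scalarSet K n) :
    ∃ (p : Fin m → Fin n × Fin n) (i j : Fin n), i ≠ j ∧
      mlEval α (fun k => (Matrix.single (p k).1 (p k).2 1 : Matrix (Fin n) (Fin n) K)) i j ≠ 0 := by
  by_contra hcon
  push Not at hcon
  have hdiag : ∀ (a : Fin m → Matrix (Fin n) (Fin n) K) (i j : Fin n), i ≠ j →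
      mlEval α a i j = 0 := by
    intro a i j hij
    have key : (Matrix.entryLinearMap K K i j).compMultilinearMap
        (mlMul α : MultilinearMap K (fun _ : Fin m => Matrix (Fin n) (Fin n) K) _) = 0 := by
      refine Module.Basis.ext_multilinear (fun _ => Matrix.stdBasis K (Fin n) (Fin n)) fun p => ?_
      have := hcon p i j hij
      have hb : (fun k => Matrix.stdBasis K (Fin n) (Fin n) (p k)) =
          fun k => (Matrix.single (p k).1 (p k).2 1 : Matrix (Fin n) (Fin n) K) := by
        funext k
        exact Matrix.stdBasis_eq_single K (p k).1 (p k).2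
      simp only [LinearMap.compMultilinearMap_apply, mlMul_apply]
      rw [hb]
      simpa using this
    have := congrArg (fun F => F a) key
    simpa [mlMul_apply] using this
  apply hf
  rintro _ ⟨a, rfl⟩
  have heq : ∀ i j : Fin n, mlEval α a i i = mlEval α a j j := by
    intro i j
    by_cases hij : i = j
    · rw [hij]
    let P : (Matrix (Fin n) (Fin n) K)ˣ :=
      ⟨Matrix.transvection i j 1, Matrix.transvection i j (-1),
        by rw [Matrix.transvection_mul_transvection_same _ _ hij]; simp,
        by rw [Matrix.transvection_mul_transvection_same _ _ hij]; simp⟩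
    have h1 := ml_map α (MulSemiringAction.toAlgHom K (Matrix (Fin n) (Fin n) K)
      (ConjAct.toConjAct P)) a
    have h2 := congrFun (congrFun h1 i) j
    rw [hdiag _ i j hij] at h2
    have h3 : (Matrix.transvection i j (1:K) * mlEval α a * Matrix.transvection i j (-1:K)) i j = 0 := by
      simpa [ConjAct.units_smul_def, P] using h2
    have h4 := hdiag a i j hij
    have h5 := hdiag a j i (Ne.symm hij)
    simp [h4, h5] at h3
    linear_combination -h3
  let i0 : Fin n := ⟨0, by omega⟩
  refine ⟨mlEval α a i0 i0, ?_⟩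
  ext i j
  by_cases hij : i = j
  · subst hij
    simp [heq i i0]
  · simp [hij, hdiag a i j hij]

theorem exists_perm2 {n : ℕ} {i j a b : Fin n} (hij : i ≠ j) (hab : a ≠ b) :
    ∃ e : Equiv.Perm (Fin n), e i = a ∧ e j = b := by
  refine ⟨(Equiv.swap i a).trans (Equiv.swap (Equiv.swap i a j) b), ?_, ?_⟩
  · simp only [Equiv.trans_apply, Equiv.swap_apply_left]
    refine Equiv.swap_apply_of_ne_of_ne ?_ hab
    intro h
    apply hij
    apply (Equiv.swap i a).injective
    simpa using h
  · simp

theorem ml_perm {K : Type} [Field K] {n m : ℕ} (α : Equiv.Perm (Fin m) → K)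
    (e : Equiv.Perm (Fin n)) (p : Fin m → Fin n × Fin n) (i j : Fin n) :
    mlEval α (fun k => (Matrix.single (e (p k).1) (e (p k).2) 1 : Matrix (Fin n) (Fin n) K))
      (e i) (e j) =
    mlEval α (fun k => (Matrix.single (p k).1 (p k).2 1 : Matrix (Fin n) (Fin n) K)) i j := by
  have h := ml_map α (Matrix.reindexAlgEquiv K K e).toAlgHom
    (fun k => (Matrix.single (p k).1 (p k).2 1 : Matrix (Fin n) (Fin n) K))
  have h2 := congrFun (congrFun h (e i)) (e j)
  simp at h2
  exact h2.symm

theorem val_add_cast {n : ℕ} [NeZero n] (a b : Fin n) :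
    (((a + b : Fin n).val : ℕ) : ZMod n) = (a.val : ZMod n) + (b.val : ZMod n) := by
  rw [Fin.val_add, ZMod.natCast_mod, Nat.cast_add]

theorem vas_single {K : Type} [Field K] {n : ℕ} (a b : Fin n) {g : ZMod n}
    (h : (b.val : ZMod n) - (a.val : ZMod n) = g) :
    VasHomog g (Matrix.single a b (1:K)) := by
  intro i j hij
  rw [Matrix.single_apply, if_neg]
  rintro ⟨rfl, rfl⟩
  exact hij h

/-- over an infinite field, if a multilinear polynomial is neither central nor a
polynomial identity for `Mₙ(K)`, then its image contains a matrix `∑ᵢ cᵢ E_{i,i+1}` (indices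
mod `n`) with all `cᵢ ≠ 0`. -/
theorem stmt_11 {K : Type} [Field K] [Infinite K] (n : ℕ) (hn : 2 ≤ n) {m : ℕ}
    (α : Equiv.Perm (Fin m) → K)
    (hf : ¬ (mlImage α : Set (Matrix (Fin n) (Fin n) K)) ⊆ scalarSet K n) :
    ∃ c : Fin n → K, (∏ i, c i) ≠ 0 ∧
      (Matrix.of fun i j : Fin n =>
          if (j.val : ZMod n) = (i.val : ZMod n) + 1 then c i else 0) ∈
        (mlImage α : Set (Matrix (Fin n) (Fin n) K)) := by
  classical
  haveI : NeZero n := ⟨by omega⟩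
  obtain ⟨p, i, j, hij, hne⟩ := exists_unit_tuple hn α hf
  have h01 : (0 : Fin n) ≠ 1 := by
    intro h
    have := congrArg Fin.val h
    rw [Fin.val_zero, Fin.val_one', Nat.mod_eq_of_lt (by omega)] at this
    omega
  have hone : (((1 : Fin n).val : ℕ) : ZMod n) = 1 := by
    rw [Fin.val_one', ZMod.natCast_mod, Nat.cast_one]
  obtain ⟨e, he0, he1⟩ := exists_perm2 hij h01
  rw [← ml_perm α e, he0, he1] at hne
  set q : Fin m → Fin n × Fin n := fun k => (e (p k).1, e (p k).2) with hq
  change mlEval α (fun k => (Matrix.single (q k).1 (q k).2 1 : Matrix (Fin n) (Fin n) K)) 0 1 ≠ 0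
    at hne
  let g : Fin m → ZMod n := fun k => ((q k).2.val : ZMod n) - ((q k).1.val : ZMod n)
  have hg : ∑ k, g k = 1 := by
    by_contra hg
    apply hne
    apply vas_ml α g _ (fun k => vas_single _ _ rfl) 0 1
    rw [hone]
    simpa using fun h => hg h.symm
  let G : Fin m → Matrix (Fin n) (Fin n) (MvPolynomial (Fin m × Fin n × Fin n) K) :=
    fun k => Matrix.of fun r s =>
      if (s.val : ZMod n) - (r.val : ZMod n) = g k then MvPolynomial.X (k, r, s) else 0
  let ev : (Fin m × Fin n × Fin n → K) → Fin m → Matrix (Fin n) (Fin n) K :=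
    fun x k => Matrix.of fun r s =>
      if (s.val : ZMod n) - (r.val : ZMod n) = g k then x (k, r, s) else 0
  have hev : ∀ x r s, MvPolynomial.aeval x (mlEval α G r s) = mlEval α (ev x) r s := by
    intro x r s
    have h := ml_map α (MvPolynomial.aeval (R := K) x).mapMatrix G
    have h2 := congrFun (congrFun h r) s
    have h3 : (fun k => (MvPolynomial.aeval (R := K) x).mapMatrix (G k)) = ev x := by
      funext k
      ext r s
      simp only [G, ev, AlgHom.mapMatrix_apply, Matrix.map_apply, Matrix.of_apply]
      split_ifs <;> simp
    rw [h3] at h2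
    simpa using h2
  have hhom : ∀ x k, VasHomog (g k) (ev x k) := by
    intro x k r s h
    simp [ev, h]
  have hpoly : ∀ t : Fin n, mlEval α G t (t + 1) ≠ 0 := by
    intro t h0
    apply hne
    rw [← ml_perm α (Equiv.addRight t)]
    have h := hev (fun y => (Matrix.single ((Equiv.addRight t) (q y.1).1)
      ((Equiv.addRight t) (q y.1).2) (1 : K)) y.2.1 y.2.2) t (t + 1)
    rw [h0, map_zero] at h
    have e0 : (Equiv.addRight t) (0 : Fin n) = t := by simp
    have e1 : (Equiv.addRight t) (1 : Fin n) = t + 1 := by simp [add_comm]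
    rw [e0, e1, h]
    refine congrFun (congrFun (congrArg (mlEval (A := Matrix (Fin n) (Fin n) K) α) ?_) t) (t + 1)
    funext k
    ext r s
    simp only [ev, Matrix.of_apply]
    split_ifs with hc
    · rfl
    · refine vas_single _ _ ?_ r s hc
      simp only [Equiv.coe_addRight, val_add_cast, g]
      ring
  have hprod : (∏ t : Fin n, mlEval α G t (t + 1)) ≠ 0 :=
    Finset.prod_ne_zero_iff.mpr fun t _ => hpoly t
  obtain ⟨x, hx⟩ : ∃ x, MvPolynomial.eval x (∏ t : Fin n, mlEval α G t (t + 1)) ≠ 0 := by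
    by_contra hcon
    push Not at hcon
    exact hprod (MvPolynomial.funext fun x => by rw [hcon x, map_zero])
  refine ⟨fun t => mlEval α (ev x) t (t + 1), ?_, ev x, ?_⟩
  · rw [map_prod] at hx
    convert hx using 2 with t
    have h := hev x t (t + 1)
    rw [MvPolynomial.aeval_eq_eval] at h
    exact h.symm
  · ext r s
    rw [Matrix.of_apply]
    split_ifs with hc
    · have : s = r + 1 := by
        rw [← hone, ← val_add_cast, ZMod.natCast_eq_natCast_iff'] at hc
        rw [Nat.mod_eq_of_lt s.isLt, Nat.mod_eq_of_lt (r + 1).isLt] at hc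
        exact Fin.ext hc
      rw [this]
    · apply vas_ml α g _ (hhom x) r s
      rw [hg]
      intro h
      apply hc
      rw [← h]; ring
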